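/- arXiv:hep-lat/0202025 — 3 statements merged into one kernel-verified Lean document; each statement's English description precedes it below -/
import Mathlib

section
/- Let m ≥ 1 be an integer. For all real t such that (t+1)^{2m} + (t−1)^{2m} ≠ 0 (in particular for all t ≠ 0... in fact for all real t), Neuberger's rational function admits the partial fraction expansion ((t+1)^{2m} − (t−1)^{2m}) / ((t+1)^{2m} + (t−1)^{2m}) = Σ_{i=1}^{m} ωᵢ · t/(t² + τᵢ), where ωᵢ = (1/m)·cos^{−2}(π(i − ½)/(2m)) and τᵢ = tan²(π(i − ½)/(2m)). -/
/-!
With `a = t + 1`, `b = t - 1` and `φ = 2θ`, where `θ` is the angle of a summand, that summand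
equals, up to the factor `1 / m`, the Poisson kernel
`(a² - b²) / (a² + b² + 2ab cos φ) = Re ((a - b z) / (a + b z))`, `z = exp (iφ)`.
The angles `φ = π (2j + 1) / (2m)`, `j < 2m`, give all solutions of `z ^ (2m) = -1`, and those
with `m ≤ j` repeat the summands with `j < m` because `cos (2π - φ) = cos φ`. So the claim is half
of the identity `∑ (a + w) / (a - w) = n (aⁿ - bⁿ) / (aⁿ + bⁿ)`, the sum running over the `n = 2m`
solutions of `wⁿ = -bⁿ`. This one follows by expanding `(aⁿ - wⁿ) / (a - w)` as a geometric sum: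
the power sums of the `w` of exponent strictly between `0` and `n` vanish
(`sum_pow_coset_eq_zero`, `sum_cayley_roots`).
-/

theorem sum_pow_coset_eq_zero {n k : ℕ} {c ζ : ℂ} (hζ : IsPrimitiveRoot ζ n)
    (hk : k ≠ 0) (hkn : k < n) :
    ∑ j ∈ Finset.range n, (c * ζ ^ j) ^ k = 0 := by
  have h1 : ζ ^ k - 1 ≠ 0 := sub_ne_zero.mpr (hζ.pow_ne_one_of_pos_of_lt hk hkn)
  have h2 : (∑ j ∈ Finset.range n, (ζ ^ k) ^ j) * (ζ ^ k - 1) = 0 := by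
    rw [geom_sum_mul, ← pow_mul, mul_comm k n, pow_mul, hζ.pow_eq_one, one_pow, sub_self]
  have h3 := (mul_eq_zero.mp h2).resolve_right h1
  calc ∑ j ∈ Finset.range n, (c * ζ ^ j) ^ k
      = c ^ k * ∑ j ∈ Finset.range n, (ζ ^ k) ^ j := by
        rw [Finset.mul_sum]
        refine Finset.sum_congr rfl fun j _ => ?_
        rw [mul_pow, ← pow_mul, ← pow_mul, mul_comm j k]
    _ = 0 := by rw [h3, mul_zero]

/-- The numbers `w = b c ζʲ` are the solutions of `wⁿ = -bⁿ`; this evaluates the sum of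
`(a + w) / (a - w)` over them. -/
theorem sum_cayley_roots {n : ℕ} (hn : 0 < n) {a b c ζ : ℂ} (hζ : IsPrimitiveRoot ζ n)
    (hc : c ^ n = -1) (hab : a ^ n + b ^ n ≠ 0) :
    ∑ j ∈ Finset.range n, (a + b * (c * ζ ^ j)) / (a - b * (c * ζ ^ j)) =
      n * ((a ^ n - b ^ n) / (a ^ n + b ^ n)) := by
  have hz (j : ℕ) : (c * ζ ^ j) ^ n = -1 := by
    rw [mul_pow, hc, ← pow_mul, mul_comm j n, pow_mul, hζ.pow_eq_one, one_pow, mul_one]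
  have hne (j : ℕ) : a - b * (c * ζ ^ j) ≠ 0 := by
    intro h
    apply hab
    rw [sub_eq_zero.mp h, mul_pow, hz]
    ring
  -- `(a + w) / (a - w) = 2a / (a - w) - 1`, and `1 / (a - w)` is a geometric sum in `w`
  have hterm (j : ℕ) : (a + b * (c * ζ ^ j)) / (a - b * (c * ζ ^ j)) =
      2 * a / (a ^ n + b ^ n) *
        (∑ k ∈ Finset.range n, (b ^ k * a ^ (n - 1 - k)) * (c * ζ ^ j) ^ k) - 1 := by
    have hg := geom_sum₂_mul (b * (c * ζ ^ j)) a n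
    rw [mul_pow b, hz] at hg
    have hs : ∑ k ∈ Finset.range n, (b ^ k * a ^ (n - 1 - k)) * (c * ζ ^ j) ^ k =
        ∑ k ∈ Finset.range n, (b * (c * ζ ^ j)) ^ k * a ^ (n - 1 - k) :=
      Finset.sum_congr rfl fun k _ => by rw [mul_pow b]; ring
    rw [← hs] at hg
    rw [div_eq_iff (hne j)]
    field_simp
    linear_combination (2 * a) * hg
  rw [Finset.sum_congr rfl fun j _ => hterm j, Finset.sum_sub_distrib, ← Finset.mul_sum,
    Finset.sum_comm]
  have hsum : ∑ k ∈ Finset.range n, ∑ j ∈ Finset.range n,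
      (b ^ k * a ^ (n - 1 - k)) * (c * ζ ^ j) ^ k = n * a ^ (n - 1) := by
    rw [Finset.sum_eq_single_of_mem 0 (Finset.mem_range.mpr hn)]
    · simp
    · intro k hk hk0
      rw [← Finset.mul_sum, sum_pow_coset_eq_zero hζ hk0 (Finset.mem_range.mp hk), mul_zero]
  have hpow : a * a ^ (n - 1) = a ^ n := mul_pow_sub_one hn.ne' a
  rw [hsum]
  simp only [Finset.sum_const, Finset.card_range, nsmul_eq_mul, mul_one]
  field_simp
  linear_combination 2 * n * hpow

theorem re_cayley (a b φ : ℝ) :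
    (((a : ℂ) - b * Complex.exp (φ * Complex.I)) /
      ((a : ℂ) + b * Complex.exp (φ * Complex.I))).re =
      (a ^ 2 - b ^ 2) / (a ^ 2 + b ^ 2 + 2 * a * b * Real.cos φ) := by
  have hsc := Real.sin_sq_add_cos_sq φ
  have hN : Complex.normSq ((a : ℂ) + b * Complex.exp (φ * Complex.I)) =
      a ^ 2 + b ^ 2 + 2 * a * b * Real.cos φ := by
    simp [Complex.normSq_apply, Complex.exp_ofReal_mul_I_re, Complex.exp_ofReal_mul_I_im]
    linear_combination b ^ 2 * hsc
  rw [Complex.div_re, hN, ← add_div]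
  congr 1
  simp [Complex.exp_ofReal_mul_I_re, Complex.exp_ofReal_mul_I_im]
  linear_combination (-b ^ 2) * hsc

/-- The discrete Poisson kernel sum over all `n`-th roots of `-1`, for `n` even. -/
theorem sum_poisson_kernel {n : ℕ} (hn : 0 < n) (he : Even n) {a b : ℝ}
    (hab : a ^ n + b ^ n ≠ 0) :
    ∑ j ∈ Finset.range n,
      (a ^ 2 - b ^ 2) /
        (a ^ 2 + b ^ 2 + 2 * a * b * Real.cos (Real.pi * (2 * j + 1) / n)) =
      n * ((a ^ n - b ^ n) / (a ^ n + b ^ n)) := by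
  have hn0 : (n : ℂ) ≠ 0 := by exact_mod_cast hn.ne'
  have hc : (Complex.exp (Real.pi * Complex.I / n)) ^ n = -1 := by
    rw [← Complex.exp_nat_mul, mul_div_cancel₀ _ hn0, Complex.exp_pi_mul_I]
  have hζ := Complex.isPrimitiveRoot_exp n hn.ne'
  have habC : (a : ℂ) ^ n + (-(b : ℂ)) ^ n ≠ 0 := by
    rw [he.neg_pow]
    exact_mod_cast hab
  have key := congrArg Complex.re (sum_cayley_roots hn hζ hc habC)
  rw [he.neg_pow, Complex.re_sum] at key
  have hR : (n : ℂ) * (((a : ℂ) ^ n - (b : ℂ) ^ n) / ((a : ℂ) ^ n + (b : ℂ) ^ n)) =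
      ((n * ((a ^ n - b ^ n) / (a ^ n + b ^ n)) : ℝ) : ℂ) := by push_cast; rfl
  rw [hR, Complex.ofReal_re] at key
  rw [← key]
  refine Finset.sum_congr rfl fun j _ => ?_
  rw [← re_cayley]
  have hexp : Complex.exp (Real.pi * Complex.I / n) *
      Complex.exp (2 * Real.pi * Complex.I / n) ^ j =
      Complex.exp (((Real.pi * (2 * j + 1) / n : ℝ) : ℂ) * Complex.I) := by
    rw [← Complex.exp_nat_mul, ← Complex.exp_add]
    congr 1
    push_cast
    field_simp
    ring
  rw [hexp]
  congr 2 <;> ring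

/-- Folding the full sum onto the upper half circle by `φ ↦ 2π - φ`. -/
theorem sum_range_cos_fold {m : ℕ} (hm : 0 < m) (f : ℝ → ℝ) :
    ∑ j ∈ Finset.range (2 * m), f (Real.cos (Real.pi * (2 * j + 1) / (2 * m : ℕ))) =
      2 * ∑ j ∈ Finset.range m, f (Real.cos (Real.pi * (2 * j + 1) / (2 * m : ℕ))) := by
  have hm0 : (m : ℝ) ≠ 0 := by exact_mod_cast hm.ne'
  rw [two_mul m, Finset.sum_range_add, two_mul (∑ j ∈ Finset.range m, _), add_right_inj,
    ← Finset.sum_range_reflect]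
  refine Finset.sum_congr rfl fun j hj => ?_
  have hj := Finset.mem_range.mp hj
  have hcast : ((m - 1 - j : ℕ) : ℝ) = m - 1 - j := by
    rw [Nat.cast_sub (by omega), Nat.cast_sub (by omega)]
    simp
  rw [← Real.cos_two_pi_sub]
  congr 2
  push_cast [hcast]
  field_simp
  ring

theorem summand_eq {t θ : ℝ} (hθ : Real.cos θ ≠ 0) :
    (Real.cos θ)⁻¹ ^ 2 * (t / (t ^ 2 + Real.tan θ ^ 2)) =
      ((t + 1) ^ 2 - (t - 1) ^ 2) /
        ((t + 1) ^ 2 + (t - 1) ^ 2 + 2 * (t + 1) * (t - 1) * Real.cos (2 * θ)) := by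
  have hsc := Real.sin_sq_add_cos_sq θ
  have hD : (t + 1) ^ 2 + (t - 1) ^ 2 + 2 * (t + 1) * (t - 1) * Real.cos (2 * θ) =
      4 * (Real.cos θ ^ 2 * (t ^ 2 + Real.tan θ ^ 2)) := by
    rw [Real.cos_two_mul, Real.tan_eq_sin_div_cos]
    field_simp
    linear_combination (-4) * hsc
  have hN : (t + 1) ^ 2 - (t - 1) ^ 2 = 4 * t := by ring
  rw [hD, hN, mul_div_mul_left _ _ (by norm_num : (4 : ℝ) ≠ 0), inv_pow, inv_mul_eq_div, div_div,
    mul_comm (t ^ 2 + _)]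


/-- Partial fraction expansion of Neuberger's rational approximation to
the sign function: for every integer `m ≥ 1` and every real `t`,
`((t+1)^{2m} - (t-1)^{2m}) / ((t+1)^{2m} + (t-1)^{2m}) = ∑_{i=1}^m ωᵢ t/(t² + τᵢ)` with
`ωᵢ = (1/m)·cos⁻²(π(i - ½)/(2m))` and `τᵢ = tan²(π(i - ½)/(2m))`. -/
theorem neuberger_partial_fraction_expansion (m : ℕ) (hm : 1 ≤ m) (t : ℝ) :
    ((t + 1) ^ (2 * m) - (t - 1) ^ (2 * m)) /
        ((t + 1) ^ (2 * m) + (t - 1) ^ (2 * m)) =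
      ∑ i : Fin m,
        (1 / (m : ℝ) * (Real.cos (Real.pi * ((i : ℝ) + 1 - 1 / 2) / (2 * m)))⁻¹ ^ 2) *
          (t / (t ^ 2 + Real.tan (Real.pi * ((i : ℝ) + 1 - 1 / 2) / (2 * m)) ^ 2)) := by
  have hm0 : (0 : ℝ) < m := by exact_mod_cast hm
  have hpos : (0 : ℝ) < (t + 1) ^ (2 * m) + (t - 1) ^ (2 * m) := by
    rw [pow_mul, pow_mul]
    rcases eq_or_ne (t + 1) 0 with h | h
    · have h' : t - 1 ≠ 0 := by intro h'; linarith
      positivity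
    · positivity
  have key := sum_poisson_kernel (by omega) (even_two_mul m) hpos.ne'
  have hfold := sum_range_cos_fold hm fun x =>
    ((t + 1) ^ 2 - (t - 1) ^ 2) / ((t + 1) ^ 2 + (t - 1) ^ 2 + 2 * (t + 1) * (t - 1) * x)
  rw [hfold] at key
  have hsum : ∑ i : Fin m,
        (1 / (m : ℝ) * (Real.cos (Real.pi * ((i : ℝ) + 1 - 1 / 2) / (2 * m)))⁻¹ ^ 2) *
          (t / (t ^ 2 + Real.tan (Real.pi * ((i : ℝ) + 1 - 1 / 2) / (2 * m)) ^ 2)) =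
      1 / (m : ℝ) * ∑ j ∈ Finset.range m, ((t + 1) ^ 2 - (t - 1) ^ 2) /
        ((t + 1) ^ 2 + (t - 1) ^ 2 +
          2 * (t + 1) * (t - 1) * Real.cos (Real.pi * (2 * j + 1) / (2 * m : ℕ))) := by
    rw [Finset.mul_sum, ← Fin.sum_univ_eq_sum_range (fun j : ℕ =>
      1 / (m : ℝ) * (((t + 1) ^ 2 - (t - 1) ^ 2) /
        ((t + 1) ^ 2 + (t - 1) ^ 2 +
          2 * (t + 1) * (t - 1) * Real.cos (Real.pi * (2 * j + 1) / (2 * m : ℕ)))))]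
    refine Finset.sum_congr rfl fun i _ => ?_
    have hi : (i : ℝ) + 1 ≤ m := by exact_mod_cast i.isLt
    have hi0 : (0 : ℝ) ≤ i := Nat.cast_nonneg _
    have hcos : Real.cos (Real.pi * ((i : ℝ) + 1 - 1 / 2) / (2 * m)) ≠ 0 := by
      refine (Real.cos_pos_of_mem_Ioo ⟨?_, ?_⟩).ne'
      · have : 0 ≤ Real.pi * ((i : ℝ) + 1 - 1 / 2) / (2 * m) :=
          div_nonneg (mul_nonneg Real.pi_pos.le (by linarith)) (by linarith)
        linarith [Real.pi_pos]
      · rw [div_lt_iff₀ (by linarith)]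
        nlinarith [Real.pi_pos]
    have harg : 2 * (Real.pi * ((i : ℝ) + 1 - 1 / 2) / (2 * m)) =
        Real.pi * (2 * (i : ℕ) + 1) / (2 * m : ℕ) := by
      push_cast
      field_simp
      ring
    rw [mul_assoc, summand_eq hcos, harg]
  rw [hsum]
  push_cast at key ⊢
  field_simp at key ⊢
  linarith
end

section
/- Let m ≥ 1 be an integer and define Neuberger's rational function r(t) = ((t+1)^{2m} − (t−1)^{2m}) / ((t+1)^{2m} + (t−1)^{2m}) for t ∈ ℝ. Then: (i) r(1) = 1 and r(−1) = −1, i.e. r is exact for |t| = 1; (ii) r(1/t) = r(t) for all t ≠ 0; (iii) the error 1 − r(t) is nonnegative for t ≥ 1 and is monotonically increasing as a function of t on [1, ∞). -/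
/-! With `a = (t+1)^{2m}` and `b = (t-1)^{2m}`, the error is `1 - r(t) = 2b / (a + b)`, where
`a + b > 0` because `t + 1` and `t - 1` do not vanish together and the exponent is even.
Nonnegativity is then clear. For `1 ≤ s ≤ t`, monotonicity amounts after cross-multiplication to
`((s-1)(t+1))^{2m} ≤ ((t-1)(s+1))^{2m}`, which follows from
`0 ≤ (s-1)(t+1) ≤ (t-1)(s+1)`. The symmetry under `t ↦ 1/t` comes from dividing numerator and
denominator by `t^{2m}`, the sign of `1 - t` being absorbed by the even exponent. -/

lemma neuberger_denom_pos (m : ℕ) (t : ℝ) : 0 < (t + 1) ^ (2 * m) + (t - 1) ^ (2 * m) := by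
  have he : Even (2 * m) := even_two_mul m
  rcases eq_or_ne (t + 1) 0 with h | h
  · have h' : t - 1 ≠ 0 := fun h' => by linarith
    exact add_pos_of_nonneg_of_pos (he.pow_nonneg _) (he.pow_pos h')
  · exact add_pos_of_pos_of_nonneg (he.pow_pos h) (he.pow_nonneg _)

/-- Properties of Neuberger's rational function
`r(t) = ((t+1)^{2m} - (t-1)^{2m}) / ((t+1)^{2m} + (t-1)^{2m})`:
(i) `r(1) = 1` and `r(-1) = -1`; (ii) `r(1/t) = r(t)` for `t ≠ 0`;
(iii) the error `1 - r(t)` is nonnegative for `t ≥ 1` and monotonically increasing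
on `[1, ∞)`. -/
theorem neuberger_rational_properties (m : ℕ) (hm : 1 ≤ m) (r : ℝ → ℝ)
    (hr : ∀ t : ℝ, r t = ((t + 1) ^ (2 * m) - (t - 1) ^ (2 * m)) /
      ((t + 1) ^ (2 * m) + (t - 1) ^ (2 * m))) :
    (r 1 = 1 ∧ r (-1) = -1) ∧
      (∀ t : ℝ, t ≠ 0 → r (1 / t) = r t) ∧
      ((∀ t : ℝ, 1 ≤ t → 0 ≤ 1 - r t) ∧
        MonotoneOn (fun t => 1 - r t) (Set.Ici (1 : ℝ))) := by
  have he : Even (2 * m) := even_two_mul m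
  have h0 : 2 * m ≠ 0 := by omega
  have herr : ∀ t : ℝ, 1 - r t =
      2 * (t - 1) ^ (2 * m) / ((t + 1) ^ (2 * m) + (t - 1) ^ (2 * m)) := by
    intro t
    rw [hr, eq_div_iff (neuberger_denom_pos m t).ne', sub_mul,
      div_mul_cancel₀ _ (neuberger_denom_pos m t).ne']
    ring
  refine ⟨⟨?_, ?_⟩, ?_, ?_, ?_⟩
  · rw [hr, sub_self, zero_pow h0, sub_zero, add_zero]
    exact div_self (by positivity)
  · rw [hr, neg_add_cancel, zero_pow h0, zero_sub, zero_add, neg_div]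
    exact congrArg Neg.neg (div_self (pow_ne_zero _ (by norm_num)))
  · intro t ht
    have h1 : (1 / t + 1) ^ (2 * m) = (t + 1) ^ (2 * m) / t ^ (2 * m) := by
      rw [← div_pow]
      congr 1
      field_simp
      ring
    have h2 : (1 / t - 1) ^ (2 * m) = (t - 1) ^ (2 * m) / t ^ (2 * m) := by
      rw [← div_pow, ← he.neg_pow]
      congr 1
      field_simp
      ring
    rw [hr, hr, h1, h2, ← sub_div, ← add_div, div_div_div_cancel_right₀ (pow_ne_zero _ ht)]
  · intro t _
    rw [herr]
    exact div_nonneg (mul_nonneg zero_le_two (he.pow_nonneg _)) (neuberger_denom_pos m t).le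
  · intro s hs t ht hst
    simp only [Set.mem_Ici] at hs ht
    simp only [herr]
    rw [div_le_div_iff₀ (neuberger_denom_pos m s) (neuberger_denom_pos m t)]
    have hcross : ((s - 1) * (t + 1)) ^ (2 * m) ≤ ((t - 1) * (s + 1)) ^ (2 * m) :=
      pow_le_pow_left₀ (mul_nonneg (by linarith) (by linarith)) (by linarith) _
    rw [mul_pow, mul_pow] at hcross
    linarith
end

section
/- Let 0 < a < b, let κ = b/a, let ε ∈ (0, 2), and let m be a positive integer satisfying m ≥ (1/2)·log(ε/(4−ε)) / log((√κ − 1)/(√κ + 1)). Then Neuberger's rational function r(t) = ((t+1)^{2m} − (t−1)^{2m}) / ((t+1)^{2m} + (t−1)^{2m}) satisfies |sign(t) − r(t)| ≤ ε/2 for all t in the scaled domain [−√κ, −1/√κ] ∪ [1/√κ, √κ] (which is the image of [−b, −a] ∪ [a, b] under scaling by the factor (ab)^{−1/2}). -/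
/-!
With `s = √κ` and `x = (s - 1) / (s + 1)`, the Cayley-type quotient `|t - 1| / (t + 1)` is at most `x`
for every `t ∈ [1/s, s]`. Hence `(t - 1)^{2m} ≤ x^{2m} (t + 1)^{2m}`, and the assumption on `m` says
exactly `x^{2m} ≤ ε / (4 - ε)`, since `log x < 0`. As
`1 - r(t) = 2 (t - 1)^{2m} / ((t + 1)^{2m} + (t - 1)^{2m})`, this gives `0 ≤ 1 - r(t) ≤ ε / 2`.
Negative `t` are covered because `r` is odd.
-/

/-- The error bound on the positive half `[1/s, s]` of the domain, with the condition on `m`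
already exponentiated. -/
lemma neuberger_pos (s ε t : ℝ) (m : ℕ) (hs : 1 < s) (hε : 0 < ε) (hε2 : ε < 2)
    (hx : ((s - 1) / (s + 1)) ^ (2 * m) ≤ ε / (4 - ε)) (h1 : s⁻¹ ≤ t) (h2 : t ≤ s) :
    |1 - ((t + 1) ^ (2 * m) - (t - 1) ^ (2 * m)) /
        ((t + 1) ^ (2 * m) + (t - 1) ^ (2 * m))| ≤ ε / 2 := by
  have hs0 : 0 < s := by linarith
  have ht : 0 < t := lt_of_lt_of_le (inv_pos.mpr hs0) h1
  have hst : 1 ≤ t * s := (inv_le_iff_one_le_mul₀ hs0).mp h1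
  have hquot : |t - 1| ≤ (s - 1) / (s + 1) * (t + 1) := by
    rw [div_mul_eq_mul_div, le_div_iff₀ (by linarith)]
    rcases abs_cases (t - 1) with ⟨h, _⟩ | ⟨h, _⟩ <;> rw [h] <;> nlinarith
  have hA : 0 < (t + 1) ^ (2 * m) := by positivity
  have hB : 0 ≤ (t - 1) ^ (2 * m) := (even_two_mul m).pow_nonneg _
  have hBA : (t - 1) ^ (2 * m) ≤ ε / (4 - ε) * (t + 1) ^ (2 * m) := by
    calc (t - 1) ^ (2 * m) = |t - 1| ^ (2 * m) := ((even_two_mul m).pow_abs _).symm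
      _ ≤ ((s - 1) / (s + 1) * (t + 1)) ^ (2 * m) := pow_le_pow_left₀ (abs_nonneg _) hquot _
      _ = ((s - 1) / (s + 1)) ^ (2 * m) * (t + 1) ^ (2 * m) := mul_pow _ _ _
      _ ≤ _ := mul_le_mul_of_nonneg_right hx hA.le
  generalize (t + 1) ^ (2 * m) = A at *
  generalize (t - 1) ^ (2 * m) = B at *
  have hAB : 0 < A + B := by linarith
  rw [div_mul_eq_mul_div, le_div_iff₀ (by linarith)] at hBA
  have herr : 1 - (A - B) / (A + B) = 2 * B / (A + B) := by
    field_simp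
    ring
  rw [herr, abs_of_nonneg (by positivity), div_le_iff₀ hAB]
  linarith

/-- Accuracy of Neuberger's rational approximation: for `0 < a < b`,
`κ = b/a`, `ε ∈ (0,2)` and a positive integer `m` with
`m ≥ (1/2)·log(ε/(4-ε)) / log((√κ-1)/(√κ+1))`, the rational function
`r(t) = ((t+1)^{2m} - (t-1)^{2m}) / ((t+1)^{2m} + (t-1)^{2m})` satisfies
`|sign(t) - r(t)| ≤ ε/2` on the scaled domain `[-√κ, -1/√κ] ∪ [1/√κ, √κ]`. -/
theorem neuberger_accuracy_bound (a b : ℝ) (ha : 0 < a) (hab : a < b)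
    (κ : ℝ) (hκ : κ = b / a)
    (ε : ℝ) (hε : 0 < ε) (hε2 : ε < 2) (m : ℕ) (hm : 0 < m)
    (hmbound : (m : ℝ) ≥
      1 / 2 * Real.log (ε / (4 - ε)) / Real.log ((Real.sqrt κ - 1) / (Real.sqrt κ + 1)))
    (t : ℝ)
    (ht : t ∈ Set.Icc (-Real.sqrt κ) (-(Real.sqrt κ)⁻¹) ∪
      Set.Icc (Real.sqrt κ)⁻¹ (Real.sqrt κ)) :
    |Real.sign t - ((t + 1) ^ (2 * m) - (t - 1) ^ (2 * m)) /
        ((t + 1) ^ (2 * m) + (t - 1) ^ (2 * m))| ≤ ε / 2 := by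
  have hs : 1 < Real.sqrt κ := by
    rw [Real.lt_sqrt zero_le_one, hκ, lt_div_iff₀ ha]
    linarith
  have hinv : 0 < (Real.sqrt κ)⁻¹ := inv_pos.mpr (by linarith)
  have hx : ((Real.sqrt κ - 1) / (Real.sqrt κ + 1)) ^ (2 * m) ≤ ε / (4 - ε) := by
    have hx0 : 0 < (Real.sqrt κ - 1) / (Real.sqrt κ + 1) :=
      div_pos (by linarith) (by linarith)
    have hx1 : (Real.sqrt κ - 1) / (Real.sqrt κ + 1) < 1 := by
      rw [div_lt_one (by linarith)]
      linarith
    rw [← Real.log_le_log_iff (pow_pos hx0 _) (div_pos hε (by linarith)), Real.log_pow]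
    -- Multiplying by `log x < 0` reverses the inequality in the hypothesis on `m`.
    have h := (div_le_iff_of_neg (Real.log_neg hx0 hx1)).mp hmbound
    push_cast
    linarith
  rcases ht with ⟨h1, h2⟩ | ⟨h1, h2⟩
  · have h := neuberger_pos (Real.sqrt κ) ε (-t) m hs hε hε2 hx (by linarith) (by linarith)
    have e1 : (-t + 1) ^ (2 * m) = (t - 1) ^ (2 * m) := by
      rw [← (even_two_mul m).neg_pow (t - 1)]
      ring_nf
    have e2 : (-t - 1) ^ (2 * m) = (t + 1) ^ (2 * m) := by
      rw [← (even_two_mul m).neg_pow (t + 1)]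
      ring_nf
    rw [e1, e2] at h
    rw [Real.sign_of_neg (by linarith), ← abs_neg]
    convert h using 2
    rw [add_comm ((t - 1) ^ (2 * m)), ← neg_sub ((t + 1) ^ (2 * m)), neg_div]
    ring
  · rw [Real.sign_of_pos (by linarith)]
    exact neuberger_pos (Real.sqrt κ) ε t m hs hε hε2 hx h1 h2
end
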